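/- For R-modules A, B, C, the trace with respect to a tensor product satisfies tr_{B⊗C}(A) ⊆ tr_B(A) ∩ tr_C(A). Moreover, if B generates Hom_R(C,A) (i.e., some direct sum of copies of B surjects onto Hom_R(C,A)), then equality holds. -/

import Mathlib

/-- The trace of `A` with respect to `B`: the submodule of `A` generated by the images
of all `R`-linear maps `B → A`. -/
def trace (R : Type) [CommRing R] (B A : Type) [AddCommGroup B] [Module R B]
    [AddCommGroup A] [Module R A] : Submodule R A :=
  ⨆ φ : B →ₗ[R] A, LinearMap.range φ

/-- `B` generates `D` if some direct sum of copies of `B` surjects onto `D`. -/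
def Generates (R : Type) [CommRing R] (B D : Type) [AddCommGroup B] [Module R B]
    [AddCommGroup D] [Module R D] : Prop :=
  ∃ (S : Type) (f : (S →₀ B) →ₗ[R] D), Function.Surjective f

open TensorProduct

/-!
If `B` generates `D`, then `tr_D(A) ⊆ tr_B(A)`. Each of `B` and `C` generates `B ⊗ C`, so
`tr_{B⊗C}(A)` lies in both traces. If `B` generates `Hom(C, A)`, then `B ⊗ C` generates
`Hom(C, A) ⊗ C`; the evaluation `Hom(C, A) ⊗ C → A` has image `tr_C(A)`, hence
`tr_C(A) ⊆ tr_{B⊗C}(A)`.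
-/

section

variable {R : Type} [CommRing R] {A B C D : Type}
  [AddCommGroup A] [Module R A] [AddCommGroup B] [Module R B]
  [AddCommGroup C] [Module R C] [AddCommGroup D] [Module R D]

lemma range_le_trace (φ : B →ₗ[R] A) : LinearMap.range φ ≤ trace R B A :=
  le_iSup (fun φ : B →ₗ[R] A ↦ LinearMap.range φ) φ

lemma apply_mem_trace (φ : B →ₗ[R] A) (b : B) : φ b ∈ trace R B A :=
  range_le_trace φ (φ.mem_range_self b)

lemma map_trace_le (g : D →ₗ[R] A) : (trace R B D).map g ≤ trace R B A := by
  rw [trace, Submodule.map_iSup]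
  refine iSup_le fun ψ ↦ ?_
  rw [← LinearMap.range_comp]
  exact range_le_trace (g ∘ₗ ψ)

lemma trace_finsupp_eq_top (S : Type) : trace R B (S →₀ B) = ⊤ := by
  rw [eq_top_iff, ← Finsupp.iSup_lsingle_range]
  exact iSup_le fun s ↦ range_le_trace (Finsupp.lsingle s)

lemma generates_iff_trace_eq_top : Generates R B D ↔ trace R B D = ⊤ := by
  constructor
  · rintro ⟨S, f, hf⟩
    rw [eq_top_iff, ← LinearMap.range_eq_top.mpr hf, ← Submodule.map_top,
      ← trace_finsupp_eq_top S]
    exact map_trace_le f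
  · intro htrace
    let evalSum : ((B →ₗ[R] D) →₀ B) →ₗ[R] D := Finsupp.lsum ℕ id
    refine ⟨B →ₗ[R] D, evalSum, LinearMap.range_eq_top.mp ?_⟩
    rw [eq_top_iff, ← htrace]
    refine iSup_le fun φ ↦ ?_
    have evalSum_single : evalSum ∘ₗ Finsupp.lsingle φ = φ :=
      Finsupp.lsum_comp_lsingle ℕ id φ
    rw [← evalSum_single]
    exact LinearMap.range_comp_le_range _ _

lemma Generates.trace_le_trace (h : Generates R B D) : trace R D A ≤ trace R B A := by
  refine iSup_le fun φ ↦ ?_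
  rw [← Submodule.map_top, ← generates_iff_trace_eq_top.mp h]
  exact map_trace_le φ

lemma generates_tensorProduct_left : Generates R B (B ⊗[R] C) := by
  rw [generates_iff_trace_eq_top, eq_top_iff, ← TensorProduct.span_tmul_eq_top, Submodule.span_le]
  rintro _ ⟨b, c, rfl⟩
  exact apply_mem_trace ((TensorProduct.mk R B C).flip c) b

lemma generates_tensorProduct_right : Generates R C (B ⊗[R] C) := by
  rw [generates_iff_trace_eq_top, eq_top_iff, ← TensorProduct.span_tmul_eq_top, Submodule.span_le]
  rintro _ ⟨b, c, rfl⟩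
  exact apply_mem_trace (TensorProduct.mk R B C b) c

lemma Generates.rTensor (h : Generates R B D) : Generates R (B ⊗[R] C) (D ⊗[R] C) := by
  classical
  obtain ⟨S, f, hf⟩ := h
  exact ⟨S, f.rTensor C ∘ₗ (TensorProduct.finsuppLeft R R B C S).symm.toLinearMap,
    (LinearMap.rTensor_surjective C hf).comp (LinearEquiv.surjective _)⟩

lemma trace_le_trace_hom_tensorProduct : trace R C A ≤ trace R ((C →ₗ[R] A) ⊗[R] C) A := by
  refine iSup_le fun φ ↦ ?_
  rintro _ ⟨c, rfl⟩
  exact apply_mem_trace (TensorProduct.lift LinearMap.id) (φ ⊗ₜ[R] c)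

end

/-- `tr_{B⊗C}(A) ⊆ tr_B(A) ∩ tr_C(A)`, with equality if `B` generates
`Hom_R(C,A)`. -/
theorem stmt_11 (R : Type) [CommRing R] (A B C : Type)
    [AddCommGroup A] [Module R A] [AddCommGroup B] [Module R B]
    [AddCommGroup C] [Module R C] :
    (trace R (B ⊗[R] C) A ≤ trace R B A ⊓ trace R C A) ∧
      (Generates R B (C →ₗ[R] A) →
        trace R (B ⊗[R] C) A = trace R B A ⊓ trace R C A) := by
  have trace_le : trace R (B ⊗[R] C) A ≤ trace R B A ⊓ trace R C A :=
    le_inf generates_tensorProduct_left.trace_le_trace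
      generates_tensorProduct_right.trace_le_trace
  refine ⟨trace_le, fun hgen ↦ le_antisymm trace_le ?_⟩
  calc trace R B A ⊓ trace R C A
      ≤ trace R C A := inf_le_right
    _ ≤ trace R ((C →ₗ[R] A) ⊗[R] C) A := trace_le_trace_hom_tensorProduct
    _ ≤ trace R (B ⊗[R] C) A := hgen.rTensor.trace_le_trace
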